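/- arXiv:2601.09987 — 2 statements merged into one kernel-verified Lean document; each statement's English description precedes it below -/
import Mathlib

section
/- Let (L,R) be a superbalanced pair of (0,1)-matrices with N+1 rows, having a common zero row (the purifier), and suppose (L,R) admits a contraction map. Then for every i ∈ {1,...,N+1}, the null reduction (L',R') of (L,R) on i admits a contraction map. -/
/-- A contraction map for a pair of (0,1)-matrices (rows indexed by `P`,
columns of `L` by `ι`, columns of `R` by `κ`): it sends the rows of `L` to the
corresponding rows of `R` and is 1-Lipschitz for the Hamming distance. -/
def IsContractionMap {P ι κ : Type} [Fintype ι] [DecidableEq ι] [Fintype κ] [DecidableEq κ]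
    (L : P → ι → Bool) (R : P → κ → Bool) (f : (ι → Bool) → κ → Bool) : Prop :=
  (∀ i, f (L i) = R i) ∧
  ∀ x x' : ι → Bool, hammingDist (f x) (f x') ≤ hammingDist x x'

theorem median_eq {m : ℕ} (a b : Fin m → Bool) :
    hammingDist (fun n => a n && b n) (fun _ => false) + hammingDist (fun n => a n && b n) a
      + hammingDist (fun n => a n && b n) b
      + (Finset.univ.filter fun n => a n = true ∧ b n = true).card
    = (Finset.univ.filter fun n => a n = true ∧ a n = true).card
      + (Finset.univ.filter fun n => b n = true ∧ b n = true).card := by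
  simp only [hammingDist, Finset.card_filter, ← Finset.sum_add_distrib]
  refine Finset.sum_congr rfl fun n _ => ?_
  cases a n <;> cases b n <;> simp

theorem median_lt {m : ℕ} (a b z : Fin m → Bool) (n₀ : Fin m) (h : z n₀ ≠ (a n₀ && b n₀)) :
    (Finset.univ.filter fun n => a n = true ∧ a n = true).card
      + (Finset.univ.filter fun n => b n = true ∧ b n = true).card
    < hammingDist z (fun _ => false) + hammingDist z a + hammingDist z b
      + (Finset.univ.filter fun n => a n = true ∧ b n = true).card := by
  simp only [hammingDist, Finset.card_filter, ← Finset.sum_add_distrib]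
  refine Finset.sum_lt_sum (fun n _ => ?_) ⟨n₀, Finset.mem_univ _, ?_⟩
  · cases a n <;> cases b n <;> cases z n <;> simp
  · revert h
    cases a n₀ <;> cases b n₀ <;> cases z n₀ <;> simp

theorem hammingDist_restrict {m : ℕ} (p : Fin m → Prop) [DecidablePred p] (x y : Fin m → Bool) :
    hammingDist (fun n : {n // p n} => x n.1) (fun n : {n // p n} => y n.1) ≤ hammingDist x y := by
  unfold hammingDist
  refine Finset.card_le_card_of_injOn (fun n => n.1) ?_ (Subtype.val_injective.injOn)
  intro n hn
  simpa using hn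

theorem hammingDist_extend {m : ℕ} (p : Fin m → Prop) [DecidablePred p] (x y : {n // p n} → Bool) :
    hammingDist (fun n => if h : p n then x ⟨n, h⟩ else false)
      (fun n => if h : p n then y ⟨n, h⟩ else false) ≤ hammingDist x y := by
  unfold hammingDist
  refine Finset.card_le_card_of_surjOn (fun n => n.1) ?_
  intro n hn
  by_cases h : p n
  · exact ⟨⟨n, h⟩, by simpa [h] using hn, rfl⟩
  · simp [h] at hn

/-- if a superbalanced pair with a purifier admits a contraction map,
then each of its null reductions admits a contraction map. -/
theorem stmt_1 {N mL mR : ℕ}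
    (L : Fin (N + 1) → Fin mL → Bool) (R : Fin (N + 1) → Fin mR → Bool)
    (hsuper : ∀ i j : Fin (N + 1),
      (Finset.univ.filter fun n => L i n = true ∧ L j n = true).card =
      (Finset.univ.filter fun n => R i n = true ∧ R j n = true).card)
    (hpurifier : ∃ p : Fin (N + 1), (∀ n, L p n = false) ∧ (∀ n, R p n = false))
    (hcontr : ∃ f : (Fin mL → Bool) → Fin mR → Bool, IsContractionMap L R f)
    (i : Fin (N + 1)) :
    ∃ f' : ({n : Fin mL // L i n = true} → Bool) → ({n : Fin mR // R i n = true} → Bool),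
      IsContractionMap (fun j (n : {n : Fin mL // L i n = true}) => L j n.1)
        (fun j (n : {n : Fin mR // R i n = true}) => R j n.1) f' := by
  obtain ⟨p, hpL, hpR⟩ := hpurifier
  obtain ⟨f, hf, hlip⟩ := hcontr
  refine ⟨fun x n => f (fun n => if h : L i n = true then x ⟨n, h⟩ else false) n.1, ?_, ?_⟩
  · intro j
    funext ⟨n, hn⟩
    have hy : (fun n => if h : L i n = true then L j n else false)
        = fun n => L i n && L j n := by
      funext n
      cases L i n <;> simp
    simp only [dite_eq_ite] at hy ⊢
    rw [hy]
    by_contra hne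
    have hlt := median_lt (R i) (R j) (f fun n => L i n && L j n) n (by simpa [hn] using hne)
    have heq := median_eq (L i) (L j)
    have h0L : L p = fun _ => false := funext hpL
    have h0R : R p = fun _ => false := funext hpR
    have h1 := hlip (fun n => L i n && L j n) (L p)
    have h2 := hlip (fun n => L i n && L j n) (L i)
    have h3 := hlip (fun n => L i n && L j n) (L j)
    rw [hf] at h1 h2 h3
    rw [h0L, h0R] at h1
    rw [hsuper i j, hsuper i i, hsuper j j] at heq
    omega
  · intro x x'
    exact (hammingDist_restrict _ _ _).trans ((hlip _ _).trans (hammingDist_extend _ x x'))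
end

section
/- Let A be the 6×3 (0,1)-matrix with rows (1,1,0),(1,1,0),(1,0,1),(1,0,1),(0,1,1),(0,1,1), and let B be the 6×8 (0,1)-matrix with rows (1,1,1,0,0,1,0,0),(1,0,0,1,1,1,0,0),(1,1,0,1,0,0,1,0),(1,0,1,0,1,0,1,0),(1,1,0,0,1,0,0,1),(1,0,1,1,0,0,0,1). Let L be the 8×15 matrix whose first 6 rows are [A | I₆ | I₆] (I₆ the 6×6 identity), whose 7th row is all 1s and whose 8th row is all 0s; let R be the 8×15 matrix whose first 6 rows are [B | O] (O the 6×7 zero matrix), whose 7th row is all 1s and whose 8th row is all 0s. Then L is positive-combinations majorized by R: for every row vector v ∈ ℝ^8 with nonnegative entries, vL is majorized by vR. -/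
/-- `x` is majorized by `y`: for every `k`, the sum of the `k` largest entries of `x`
is at most the sum of the `k` largest entries of `y` (expressed as: every `k`-element
partial sum of `x` is dominated by some `k`-element partial sum of `y`), and the total
sums agree. -/
def MajorizedBy {d : ℕ} (x y : Fin d → ℝ) : Prop :=
  (∀ s : Finset (Fin d), ∃ t : Finset (Fin d), t.card = s.card ∧
    ∑ i ∈ s, x i ≤ ∑ i ∈ t, y i) ∧
  ∑ i, x i = ∑ i, y i

def L12 : Fin 8 → Fin 15 → ℝ :=
  ![![1, 1, 0, 1, 0, 0, 0, 0, 0, 1, 0, 0, 0, 0, 0],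
     ![1, 1, 0, 0, 1, 0, 0, 0, 0, 0, 1, 0, 0, 0, 0],
     ![1, 0, 1, 0, 0, 1, 0, 0, 0, 0, 0, 1, 0, 0, 0],
     ![1, 0, 1, 0, 0, 0, 1, 0, 0, 0, 0, 0, 1, 0, 0],
     ![0, 1, 1, 0, 0, 0, 0, 1, 0, 0, 0, 0, 0, 1, 0],
     ![0, 1, 1, 0, 0, 0, 0, 0, 1, 0, 0, 0, 0, 0, 1],
     ![1, 1, 1, 1, 1, 1, 1, 1, 1, 1, 1, 1, 1, 1, 1],
     ![0, 0, 0, 0, 0, 0, 0, 0, 0, 0, 0, 0, 0, 0, 0]]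

def R12 : Fin 8 → Fin 15 → ℝ :=
  ![![1, 1, 1, 0, 0, 1, 0, 0, 0, 0, 0, 0, 0, 0, 0],
     ![1, 0, 0, 1, 1, 1, 0, 0, 0, 0, 0, 0, 0, 0, 0],
     ![1, 1, 0, 1, 0, 0, 1, 0, 0, 0, 0, 0, 0, 0, 0],
     ![1, 0, 1, 0, 1, 0, 1, 0, 0, 0, 0, 0, 0, 0, 0],
     ![1, 1, 0, 0, 1, 0, 0, 1, 0, 0, 0, 0, 0, 0, 0],
     ![1, 0, 1, 1, 0, 0, 0, 1, 0, 0, 0, 0, 0, 0, 0],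
     ![1, 1, 1, 1, 1, 1, 1, 1, 1, 1, 1, 1, 1, 1, 1],
     ![0, 0, 0, 0, 0, 0, 0, 0, 0, 0, 0, 0, 0, 0, 0]]

/-- A pair of equal-size column sets of `R`, with (a bound for) their joint row counts. -/
structure Cand where
  k : ℕ
  t : Finset (Fin 15)
  u : Finset (Fin 15)
  d0 : ℕ
  d1 : ℕ
  d2 : ℕ
  d3 : ℕ
  d4 : ℕ
  d5 : ℕ

/-- The candidates, grouped by size. -/
def candRows : List (List Cand) := [
  [⟨0, {}, {}, 0, 0, 0, 0, 0, 0⟩],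
  [⟨1, {0}, {0}, 2, 2, 2, 2, 2, 2⟩],
  [⟨2, {0, 5}, {0, 5}, 4, 4, 2, 2, 2, 2⟩,
   ⟨2, {0, 6}, {0, 6}, 2, 2, 4, 4, 2, 2⟩,
   ⟨2, {0, 7}, {0, 7}, 2, 2, 2, 2, 4, 4⟩],
  [⟨3, {0, 1, 5}, {0, 1, 5}, 6, 4, 4, 2, 4, 2⟩,
   ⟨3, {0, 1, 6}, {0, 1, 6}, 4, 2, 6, 4, 4, 2⟩,
   ⟨3, {0, 1, 7}, {0, 1, 7}, 4, 2, 4, 2, 6, 4⟩,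
   ⟨3, {0, 2, 6}, {0, 2, 6}, 4, 2, 4, 6, 2, 4⟩,
   ⟨3, {0, 2, 7}, {0, 2, 7}, 4, 2, 2, 4, 4, 6⟩,
   ⟨3, {0, 3, 5}, {0, 3, 5}, 4, 6, 4, 2, 2, 4⟩,
   ⟨3, {0, 1, 2}, {0, 3, 4}, 4, 4, 4, 4, 4, 4⟩],
  [⟨4, {0, 1, 2, 3}, {0, 1, 2, 3}, 6, 4, 6, 4, 4, 6⟩,
   ⟨4, {0, 1, 2, 4}, {0, 1, 2, 4}, 6, 4, 4, 6, 6, 4⟩,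
   ⟨4, {0, 3, 4, 5}, {0, 3, 4, 5}, 4, 8, 4, 4, 4, 4⟩,
   ⟨4, {0, 1, 2, 5}, {0, 1, 2, 5}, 8, 4, 4, 4, 4, 4⟩,
   ⟨4, {0, 1, 2, 6}, {0, 1, 2, 6}, 6, 2, 6, 6, 4, 4⟩,
   ⟨4, {0, 1, 2, 7}, {0, 1, 2, 7}, 6, 2, 4, 4, 6, 6⟩,
   ⟨4, {0, 1, 3, 5}, {0, 1, 3, 5}, 6, 6, 6, 2, 4, 4⟩,
   ⟨4, {0, 1, 3, 6}, {0, 1, 3, 6}, 4, 4, 8, 4, 4, 4⟩,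
   ⟨4, {0, 1, 4, 7}, {0, 1, 4, 7}, 4, 4, 4, 4, 8, 4⟩,
   ⟨4, {0, 2, 3, 7}, {0, 2, 3, 7}, 4, 4, 4, 4, 4, 8⟩,
   ⟨4, {0, 2, 4, 6}, {0, 2, 4, 6}, 4, 4, 4, 8, 4, 4⟩],
  [⟨5, {0, 1, 2, 3, 4}, {0, 1, 2, 3, 4}, 6, 6, 6, 6, 6, 6⟩,
   ⟨5, {0, 1, 2, 3, 5}, {0, 1, 2, 3, 5}, 8, 6, 6, 4, 4, 6⟩,
   ⟨5, {0, 1, 2, 3, 6}, {0, 1, 2, 3, 6}, 6, 4, 8, 6, 4, 6⟩,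
   ⟨5, {0, 1, 2, 3, 7}, {0, 1, 2, 3, 7}, 6, 4, 6, 4, 6, 8⟩,
   ⟨5, {0, 1, 2, 4, 6}, {0, 1, 2, 4, 6}, 6, 4, 6, 8, 6, 4⟩,
   ⟨5, {0, 1, 2, 4, 7}, {0, 1, 2, 4, 7}, 6, 4, 4, 6, 8, 6⟩,
   ⟨5, {0, 1, 3, 4, 5}, {0, 1, 3, 4, 5}, 6, 8, 6, 4, 6, 4⟩],
  [⟨6, {0, 1, 2, 3, 4, 5}, {0, 1, 2, 3, 4, 5}, 8, 8, 6, 6, 6, 6⟩,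
   ⟨6, {0, 1, 2, 3, 4, 6}, {0, 1, 2, 3, 4, 6}, 6, 6, 8, 8, 6, 6⟩,
   ⟨6, {0, 1, 2, 3, 4, 7}, {0, 1, 2, 3, 4, 7}, 6, 6, 6, 6, 8, 8⟩],
  [⟨7, {0, 1, 2, 3, 4, 5, 6}, {0, 1, 2, 3, 4, 5, 6}, 8, 8, 8, 8, 6, 6⟩,
   ⟨7, {0, 1, 2, 3, 4, 5, 7}, {0, 1, 2, 3, 4, 5, 7}, 8, 8, 6, 6, 8, 8⟩,
   ⟨7, {0, 1, 2, 3, 4, 6, 7}, {0, 1, 2, 3, 4, 6, 7}, 6, 6, 8, 8, 8, 8⟩],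
  [⟨8, {0, 1, 2, 3, 4, 5, 6, 7}, {0, 1, 2, 3, 4, 5, 6, 7}, 8, 8, 8, 8, 8, 8⟩],
  [⟨9, {0, 1, 2, 3, 4, 5, 6, 7, 8}, {0, 1, 2, 3, 4, 5, 6, 7, 8}, 8, 8, 8, 8, 8, 8⟩],
  [⟨10, {0, 1, 2, 3, 4, 5, 6, 7, 8, 9}, {0, 1, 2, 3, 4, 5, 6, 7, 8, 9}, 8, 8, 8, 8, 8, 8⟩],
  [⟨11, {0, 1, 2, 3, 4, 5, 6, 7, 8, 9, 10}, {0, 1, 2, 3, 4, 5, 6, 7, 8, 9, 10}, 8, 8, 8, 8, 8, 8⟩],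
  [⟨12, {0, 1, 2, 3, 4, 5, 6, 7, 8, 9, 10, 11}, {0, 1, 2, 3, 4, 5, 6, 7, 8, 9, 10, 11}, 8, 8, 8, 8, 8, 8⟩],
  [⟨13, {0, 1, 2, 3, 4, 5, 6, 7, 8, 9, 10, 11, 12}, {0, 1, 2, 3, 4, 5, 6, 7, 8, 9, 10, 11, 12}, 8, 8, 8, 8, 8, 8⟩],
  [⟨14, {0, 1, 2, 3, 4, 5, 6, 7, 8, 9, 10, 11, 12, 13}, {0, 1, 2, 3, 4, 5, 6, 7, 8, 9, 10, 11, 12, 13}, 8, 8, 8, 8, 8, 8⟩],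
  [⟨15, {0, 1, 2, 3, 4, 5, 6, 7, 8, 9, 10, 11, 12, 13, 14}, {0, 1, 2, 3, 4, 5, 6, 7, 8, 9, 10, 11, 12, 13, 14}, 8, 8, 8, 8, 8, 8⟩]]

/-- `R12` with natural entries. -/
def RN : Fin 8 → Fin 15 → ℕ :=
  ![![1, 1, 1, 0, 0, 1, 0, 0, 0, 0, 0, 0, 0, 0, 0],
     ![1, 0, 0, 1, 1, 1, 0, 0, 0, 0, 0, 0, 0, 0, 0],
     ![1, 1, 0, 1, 0, 0, 1, 0, 0, 0, 0, 0, 0, 0, 0],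
     ![1, 0, 1, 0, 1, 0, 1, 0, 0, 0, 0, 0, 0, 0, 0],
     ![1, 1, 0, 0, 1, 0, 0, 1, 0, 0, 0, 0, 0, 0, 0],
     ![1, 0, 1, 1, 0, 0, 0, 1, 0, 0, 0, 0, 0, 0, 0],
     ![1, 1, 1, 1, 1, 1, 1, 1, 1, 1, 1, 1, 1, 1, 1],
     ![0, 0, 0, 0, 0, 0, 0, 0, 0, 0, 0, 0, 0, 0, 0]]

lemma R12_eq (i : Fin 8) (n : Fin 15) : R12 i n = (RN i n : ℝ) := by
  fin_cases i <;> fin_cases n <;> simp [R12, RN]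

def Cand.cov (e : Cand) (i : Fin 8) : ℕ := ∑ n ∈ e.t, RN i n + ∑ n ∈ e.u, RN i n

set_option maxRecDepth 100000 in
lemma table_ok : ∀ r ∈ candRows, ∀ e ∈ r, e.t.card = e.k ∧ e.u.card = e.k ∧
    e.d0 = e.cov 0 ∧ e.d1 = e.cov 1 ∧ e.d2 = e.cov 2 ∧ e.d3 = e.cov 3 ∧ e.d4 = e.cov 4 ∧
    e.d5 = e.cov 5 ∧ 2 * e.k = e.cov 6 ∧ 0 = e.cov 7 := by
  decide +kernel

def checkOne (k c0 c1 c2 c3 c4 c5 : ℕ) : Bool :=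
  (candRows.getD k []).any fun e => Nat.beq e.k k && (Nat.ble (Nat.mul 2 c0) e.d0 &&
    (Nat.ble (Nat.mul 2 c1) e.d1 && (Nat.ble (Nat.mul 2 c2) e.d2 &&
      (Nat.ble (Nat.mul 2 c3) e.d3 && (Nat.ble (Nat.mul 2 c4) e.d4 &&
        Nat.ble (Nat.mul 2 c5) e.d5)))))

def checkAll : Bool :=
  [0, 1].all fun x => [0, 1].all fun y => [0, 1].all fun z =>
  [0, 1, 2].all fun p0 => [0, 1, 2].all fun p1 => [0, 1, 2].all fun p2 =>
  [0, 1, 2].all fun p3 => [0, 1, 2].all fun p4 => [0, 1, 2].all fun p5 =>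
    checkOne (Nat.add (Nat.add (Nat.add (Nat.add (Nat.add (Nat.add (Nat.add (Nat.add x y) z) p0) p1) p2) p3) p4) p5)
      (Nat.add (Nat.add x y) p0) (Nat.add (Nat.add x y) p1) (Nat.add (Nat.add x z) p2)
      (Nat.add (Nat.add x z) p3) (Nat.add (Nat.add y z) p4) (Nat.add (Nat.add y z) p5)

set_option maxRecDepth 100000 in
lemma checkAll_true : checkAll = true := by decide +kernel

lemma exists_cand (x y z p0 p1 p2 p3 p4 p5 : ℕ) (hx : x ≤ 1) (hy : y ≤ 1) (hz : z ≤ 1)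
    (h0 : p0 ≤ 2) (h1 : p1 ≤ 2) (h2 : p2 ≤ 2) (h3 : p3 ≤ 2) (h4 : p4 ≤ 2) (h5 : p5 ≤ 2) :
    ∃ r ∈ candRows, ∃ e ∈ r, e.k = x + y + z + p0 + p1 + p2 + p3 + p4 + p5 ∧
      2 * (x + y + p0) ≤ e.d0 ∧ 2 * (x + y + p1) ≤ e.d1 ∧ 2 * (x + z + p2) ≤ e.d2 ∧
      2 * (x + z + p3) ≤ e.d3 ∧ 2 * (y + z + p4) ≤ e.d4 ∧ 2 * (y + z + p5) ≤ e.d5 := by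
  have two : ∀ q : ℕ, q ≤ 1 → q ∈ [0, 1] := by
    intro q hq; interval_cases q <;> simp
  have three : ∀ q : ℕ, q ≤ 2 → q ∈ [0, 1, 2] := by
    intro q hq; interval_cases q <;> simp
  have h := checkAll_true
  unfold checkAll at h
  have h := List.all_eq_true.1 h x (two x hx)
  have h := List.all_eq_true.1 h y (two y hy)
  have h := List.all_eq_true.1 h z (two z hz)
  have h := List.all_eq_true.1 h p0 (three p0 h0)
  have h := List.all_eq_true.1 h p1 (three p1 h1)
  have h := List.all_eq_true.1 h p2 (three p2 h2)
  have h := List.all_eq_true.1 h p3 (three p3 h3)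
  have h := List.all_eq_true.1 h p4 (three p4 h4)
  have h := List.all_eq_true.1 h p5 (three p5 h5)
  change checkOne (x + y + z + p0 + p1 + p2 + p3 + p4 + p5)
      (x + y + p0) (x + y + p1) (x + z + p2) (x + z + p3) (y + z + p4) (y + z + p5) = true at h
  unfold checkOne at h
  obtain ⟨e, he, h⟩ := List.any_eq_true.1 h
  have hr : candRows.getD (x + y + z + p0 + p1 + p2 + p3 + p4 + p5) [] ∈ candRows := by
    rw [List.getD_eq_getElem?_getD] at he ⊢
    cases hq : candRows[x + y + z + p0 + p1 + p2 + p3 + p4 + p5]? with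
    | none => simp [hq] at he
    | some r => simpa using List.mem_of_getElem? hq
  refine ⟨_, hr, e, he, ?_⟩
  simp only [Bool.and_eq_true] at h
  obtain ⟨a, b0, b1, b2, b3, b4, b5⟩ := h
  exact ⟨Nat.eq_of_beq_eq_true a, Nat.le_of_ble_eq_true b0, Nat.le_of_ble_eq_true b1,
    Nat.le_of_ble_eq_true b2, Nat.le_of_ble_eq_true b3, Nat.le_of_ble_eq_true b4,
    Nat.le_of_ble_eq_true b5⟩

lemma sum_R (v : Fin 8 → ℝ) (t : Finset (Fin 15)) :
    ∑ n ∈ t, ∑ i, v i * R12 i n = ∑ i, v i * ((∑ n ∈ t, RN i n : ℕ) : ℝ) := by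
  rw [Finset.sum_comm]
  refine Finset.sum_congr rfl fun i _ => ?_
  rw [← Finset.mul_sum]
  push_cast
  simp only [R12_eq]

lemma sum_L (v : Fin 8 → ℝ) (c : Fin 15 → ℝ) :
    ∑ n, c n * ∑ i, v i * L12 i n =
      v 0 * (c 0 + c 1 + (c 3 + c 9)) + v 1 * (c 0 + c 1 + (c 4 + c 10)) +
      v 2 * (c 0 + c 2 + (c 5 + c 11)) + v 3 * (c 0 + c 2 + (c 6 + c 12)) +
      v 4 * (c 1 + c 2 + (c 7 + c 13)) + v 5 * (c 1 + c 2 + (c 8 + c 14)) +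
      v 6 * (c 0 + c 1 + c 2 + (c 3 + c 9) + (c 4 + c 10) + (c 5 + c 11) + (c 6 + c 12) +
        (c 7 + c 13) + (c 8 + c 14)) := by
  have key : ∀ f : Fin 15 → ℝ, ∑ n, f n = f 0 + f 1 + f 2 + f 3 + f 4 + f 5 + f 6 + f 7 + f 8 +
      f 9 + f 10 + f 11 + f 12 + f 13 + f 14 := by
    intro f
    simp only [Fin.sum_univ_castSucc, Fin.sum_univ_zero, zero_add]
    rfl
  have col : ∀ n, ∑ i, v i * L12 i n =
      ![v 0 + v 1 + v 2 + v 3 + v 6, v 0 + v 1 + v 4 + v 5 + v 6, v 2 + v 3 + v 4 + v 5 + v 6,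
        v 0 + v 6, v 1 + v 6, v 2 + v 6, v 3 + v 6, v 4 + v 6, v 5 + v 6,
        v 0 + v 6, v 1 + v 6, v 2 + v 6, v 3 + v 6, v 4 + v 6, v 5 + v 6] n := by
    intro n
    fin_cases n <;> simp [Fin.sum_univ_eight, L12]
  simp only [col]
  rw [key]
  simp
  ring

/-- `L12` is positive-combinations majorized by `R12`. -/
theorem stmt_12 :
    ∀ v : Fin 8 → ℝ, (∀ i, 0 ≤ v i) →
      MajorizedBy (fun n => ∑ i, v i * L12 i n) (fun n => ∑ i, v i * R12 i n) := by
  intro v hv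
  refine ⟨fun s => ?_, ?_⟩
  · let χ : Fin 15 → ℕ := fun n => if n ∈ s then 1 else 0
    have hχ : ∀ n, χ n ≤ 1 := by intro n; simp only [χ]; split_ifs <;> simp
    have hs : ∑ n ∈ s, ∑ i, v i * L12 i n = ∑ n, (χ n : ℝ) * ∑ i, v i * L12 i n := by
      simp [χ]
    have hk : s.card = χ 0 + χ 1 + χ 2 + (χ 3 + χ 9) + (χ 4 + χ 10) + (χ 5 + χ 11) +
        (χ 6 + χ 12) + (χ 7 + χ 13) + (χ 8 + χ 14) := by
      have h1 : s.card = ∑ n, χ n := by simp [χ]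
      have key : ∀ f : Fin 15 → ℕ, ∑ n, f n = f 0 + f 1 + f 2 + f 3 + f 4 + f 5 + f 6 + f 7 +
          f 8 + f 9 + f 10 + f 11 + f 12 + f 13 + f 14 := by
        intro f
        simp only [Fin.sum_univ_castSucc, Fin.sum_univ_zero, zero_add]
        rfl
      rw [h1, key]; ring
    obtain ⟨r, hr, e, he, ek, b0, b1, b2, b3, b4, b5⟩ := exists_cand (χ 0) (χ 1) (χ 2) (χ 3 + χ 9)
      (χ 4 + χ 10) (χ 5 + χ 11) (χ 6 + χ 12) (χ 7 + χ 13) (χ 8 + χ 14) (hχ 0) (hχ 1) (hχ 2)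
      (add_le_add (hχ 3) (hχ 9)) (add_le_add (hχ 4) (hχ 10)) (add_le_add (hχ 5) (hχ 11))
      (add_le_add (hχ 6) (hχ 12)) (add_le_add (hχ 7) (hχ 13)) (add_le_add (hχ 8) (hχ 14))
    obtain ⟨ht, hu, e0, e1, e2, e3, e4, e5, e6, e7⟩ := table_ok r hr e he
    rw [← hk] at ek
    have hsum : ∑ n ∈ e.t, ∑ i, v i * R12 i n + ∑ n ∈ e.u, ∑ i, v i * R12 i n =
        ∑ i, v i * (e.cov i : ℝ) := by
      rw [sum_R, sum_R, ← Finset.sum_add_distrib]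
      refine Finset.sum_congr rfl fun i _ => ?_
      simp only [Cand.cov]
      push_cast
      ring
    have main : 2 * ∑ n ∈ s, ∑ i, v i * L12 i n ≤
        ∑ n ∈ e.t, ∑ i, v i * R12 i n + ∑ n ∈ e.u, ∑ i, v i * R12 i n := by
      rw [hsum, hs, sum_L, Fin.sum_univ_eight, ← e0, ← e1, ← e2, ← e3, ← e4, ← e5, ← e6, ← e7,
        ek, hk]
      have m : ∀ i (a b : ℕ), 2 * a ≤ b → 2 * (v i * (a : ℝ)) ≤ v i * (b : ℝ) := by
        intro i a b hab
        have : (2 : ℝ) * a ≤ b := by exact_mod_cast hab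
        nlinarith [mul_le_mul_of_nonneg_left this (hv i)]
      have m0 := m 0 _ _ b0
      have m1 := m 1 _ _ b1
      have m2 := m 2 _ _ b2
      have m3 := m 3 _ _ b3
      have m4 := m 4 _ _ b4
      have m5 := m 5 _ _ b5
      push_cast at m0 m1 m2 m3 m4 m5 ⊢
      linarith
    by_cases hc : ∑ n ∈ s, ∑ i, v i * L12 i n ≤ ∑ n ∈ e.t, ∑ i, v i * R12 i n
    · exact ⟨e.t, by rw [ht, ek], hc⟩
    · exact ⟨e.u, by rw [hu, ek], by push Not at hc; show _ ≤ _; linarith⟩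
  · have h1 := sum_L v (fun _ => 1)
    simp only [one_mul] at h1
    show ∑ n, ∑ i, v i * L12 i n = ∑ n, ∑ i, v i * R12 i n
    rw [h1, sum_R, Fin.sum_univ_eight]
    have r : ∀ i, ∑ n, RN i n = ![4, 4, 4, 4, 4, 4, 15, 0] i := by decide +kernel
    simp only [r]
    simp
    ring
end
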